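/- If there exists X_α^0 ∈ 𝒳_α with E_{λQ_α^c}[X_α^0] = γ_α^c and E_μ[X_α^0] < α, then for every countably additive probability measure P on (Ω, F) and every X_α ∈ 𝒳_α with E_{λQ_α^c}[X_α] = γ_α^c, there exists a measurable function B : Ω → [0,1] such that, with the finite measure K := (P + λ·Q_α^c)/2 and the Radon–Nikodym derivative H := d(λQ_α^c)/dK, one has X_α = 1_{{H > 0}} + B·1_{{H = 0}} K-almost surely. -/

import Mathlib

open MeasureTheory Filter Topology
open scoped ENNReal

/-- `X` belongs to the space `𝒳` of bounded measurable real-valued functions on `Ω`. -/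
def MemX {Ω : Type*} [MeasurableSpace Ω] (X : Ω → ℝ) : Prop :=
  Measurable X ∧ ∃ M : ℝ, ∀ ω, |X ω| ≤ M

/-- A sublinear operator on `𝒳`: monotone, constant preserving, subadditive and
positively homogeneous. -/
def IsSublinearOp {Ω : Type*} [MeasurableSpace Ω] (ρ : (Ω → ℝ) → ℝ) : Prop :=
  (∀ X Y : Ω → ℝ, MemX X → MemX Y → (∀ ω, Y ω ≤ X ω) → ρ Y ≤ ρ X) ∧
  (∀ c : ℝ, ρ (fun _ => c) = c) ∧
  (∀ X Y : Ω → ℝ, MemX X → MemX Y → ρ (X + Y) ≤ ρ X + ρ Y) ∧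
  (∀ c : ℝ, 0 ≤ c → ∀ X : Ω → ℝ, MemX X → ρ (c • X) = c * ρ X)

/-- A linear functional on `𝒳`. -/
def IsLinearOp {Ω : Type*} [MeasurableSpace Ω] (L : (Ω → ℝ) → ℝ) : Prop :=
  (∀ X Y : Ω → ℝ, MemX X → MemX Y → L (X + Y) = L X + L Y) ∧
  (∀ (c : ℝ) (X : Ω → ℝ), MemX X → L (c • X) = c * L X)

/-- `L` is dominated by `ρ` on `𝒳`. -/
def Dominated {Ω : Type*} [MeasurableSpace Ω] (L ρ : (Ω → ℝ) → ℝ) : Prop :=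
  ∀ X : Ω → ℝ, MemX X → L X ≤ ρ X

/-- The conjugate operator `E_ῡ[X] := -E_υ[-X]`. -/
def conjOp {Ω : Type*} (ρ : (Ω → ℝ) → ℝ) : (Ω → ℝ) → ℝ := fun X => -ρ (-X)

/-- The set `𝒳_α` of test functions at significance level `α`. -/
def testSet {Ω : Type*} [MeasurableSpace Ω] (Emu : (Ω → ℝ) → ℝ) (α : ℝ) : Set (Ω → ℝ) :=
  {X | MemX X ∧ (∀ ω, 0 ≤ X ω ∧ X ω ≤ 1) ∧ Emu X ≤ α}

/-- A positive normalized linear functional `Qp` is *pure additive* if there is a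
sequence of measurable sets `A n ↓ ∅` with `Qp(1_{A n}) → 1`. -/
def PureAdditive {Ω : Type*} [MeasurableSpace Ω] (Qp : (Ω → ℝ) → ℝ) : Prop :=
  ∃ A : ℕ → Set Ω, (∀ n, MeasurableSet (A n)) ∧ Antitone A ∧ (⋂ n, A n) = ∅ ∧
    Tendsto (fun n => Qp ((A n).indicator fun _ => (1 : ℝ))) atTop (𝓝 1)

/-- Hypothesis (H1): for every sequence of measurable sets `A n ↓ ∅` such that
`lim E_υ[1_{A n}]` exists and is nonzero, one has `lim E_μ[1_{A n}] = 0`. -/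
def HypH1 {Ω : Type*} [MeasurableSpace Ω] (Emu Eups : (Ω → ℝ) → ℝ) : Prop :=
  ∀ A : ℕ → Set Ω, (∀ n, MeasurableSet (A n)) → Antitone A → (⋂ n, A n) = ∅ →
    ∀ l : ℝ, Tendsto (fun n => Eups ((A n).indicator fun _ => (1 : ℝ))) atTop (𝓝 l) →
      l ≠ 0 →
      Tendsto (fun n => Emu ((A n).indicator fun _ => (1 : ℝ))) atTop (𝓝 0)

/-- Hypothesis (H2): for every `X ∈ 𝒳_α` with `E_μ[X] > 0` and every positive
integer `K`, `E_μ[X] > E_μ[(X - 1/K)⁺]`. -/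
def HypH2 {Ω : Type*} [MeasurableSpace Ω] (Emu : (Ω → ℝ) → ℝ) (α : ℝ) : Prop :=
  ∀ X ∈ testSet Emu α, 0 < Emu X → ∀ K : ℕ, 0 < K →
    Emu (fun ω => max (X ω - 1 / (K : ℝ)) 0) < Emu X

/-- Hypothesis (H3): for every sequence of measurable sets `A n ↓ ∅`,
`lim E_μ[1_{A n}] < 1` and `lim E_υ[1_{A n}] < 1`. -/
def HypH3 {Ω : Type*} [MeasurableSpace Ω] (Emu Eups : (Ω → ℝ) → ℝ) : Prop :=
  ∀ A : ℕ → Set Ω, (∀ n, MeasurableSet (A n)) → Antitone A → (⋂ n, A n) = ∅ →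
    (∀ l : ℝ, Tendsto (fun n => Emu ((A n).indicator fun _ => (1 : ℝ))) atTop (𝓝 l) →
      l < 1) ∧
    (∀ l : ℝ, Tendsto (fun n => Eups ((A n).indicator fun _ => (1 : ℝ))) atTop (𝓝 l) →
      l < 1)

/-!
If the level constraint is slack at a maximizer, moving from it towards any other randomized test
stays admissible for a short while, so by convexity the maximizer is optimal among all randomized
tests, in particular against the constant test `1`. Hence every optimal test has the same integral
as `1` under `ν = λQ`, so it equals `1` `ν`-almost everywhere, which seen from `K` means `K`-almost
everywhere on `{dν/dK > 0}`.
-/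

/-- The randomized tests on `Ω`, i.e. the feasible region of the testing problem before the level
constraint is imposed. Unlike `testSet` it does not mention `MemX`, since `[0, 1]`-valued functions
are bounded. -/
def randomizedTests (Ω : Type*) [MeasurableSpace Ω] : Set (Ω → ℝ) :=
  {X | Measurable X ∧ ∀ ω, X ω ∈ Set.Icc 0 1}

theorem isMaxOn_of_isMaxOn_sublevel_of_lt {E : Type*} [AddCommGroup E] [Module ℝ E] {s : Set E}
    {f g : E → ℝ} {α : ℝ} {x : E} (hf : ConvexOn ℝ s f) (hg : ConcaveOn ℝ s g) (hx : x ∈ s)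
    (hlt : f x < α) (hmax : IsMaxOn g {z ∈ s | f z ≤ α} x) : IsMaxOn g s x := by
  intro y hy
  have htendsto : Tendsto (fun t : ℝ => (1 - t) * f x + t * f y) (𝓝[>] 0) (𝓝 (f x)) := by
    have hcont : Continuous fun t : ℝ => (1 - t) * f x + t * f y := by fun_prop
    simpa using (hcont.tendsto 0).mono_left nhdsWithin_le_nhds
  obtain ⟨t, hft, ht0, ht1⟩ :=
    ((htendsto.eventually_lt_const hlt).and (Ioo_mem_nhdsGT zero_lt_one)).exists
  have h1t : 0 ≤ 1 - t := sub_nonneg.2 ht1.le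
  have hfeasible : (1 - t) • x + t • y ∈ {z ∈ s | f z ≤ α} :=
    ⟨hf.1 hx hy h1t ht0.le (sub_add_cancel 1 t),
      (hf.2 hx hy h1t ht0.le (sub_add_cancel 1 t)).trans hft.le⟩
  have hconcave : (1 - t) * g x + t * g y ≤ g x :=
    (hg.2 hx hy h1t ht0.le (sub_add_cancel 1 t)).trans (hmax hfeasible)
  exact le_of_mul_le_mul_left (by linarith : t * g y ≤ t * g x) ht0

section

variable {Ω : Type*} [MeasurableSpace Ω] {ρ : (Ω → ℝ) → ℝ} {X Y : Ω → ℝ} {α : ℝ}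

theorem MemX.add (hX : MemX X) (hY : MemX Y) : MemX (X + Y) := by
  obtain ⟨hXm, M, hM⟩ := hX
  obtain ⟨hYm, N, hN⟩ := hY
  exact ⟨hXm.add hYm, M + N, fun ω => (abs_add_le _ _).trans (add_le_add (hM ω) (hN ω))⟩

theorem MemX.const_smul (hX : MemX X) (c : ℝ) : MemX (c • X) := by
  obtain ⟨hXm, M, hM⟩ := hX
  refine ⟨hXm.const_smul c, |c| * M, fun ω => ?_⟩
  rw [Pi.smul_apply, smul_eq_mul, abs_mul]
  exact mul_le_mul_of_nonneg_left (hM ω) (abs_nonneg c)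

theorem convex_memX : Convex ℝ {X : Ω → ℝ | MemX X} :=
  fun _ hX _ hY a b _ _ _ => (MemX.const_smul hX a).add (MemX.const_smul hY b)

theorem IsSublinearOp.convexOn (hρ : IsSublinearOp ρ) : ConvexOn ℝ {X | MemX X} ρ := by
  obtain ⟨-, -, hsub, hhom⟩ := hρ
  refine ⟨convex_memX, fun X hX Y hY a b ha hb _ => ?_⟩
  calc ρ (a • X + b • Y) ≤ ρ (a • X) + ρ (b • Y) := hsub _ _ (hX.const_smul a) (hY.const_smul b)
    _ = a • ρ X + b • ρ Y := by rw [hhom a ha X hX, hhom b hb Y hY, smul_eq_mul, smul_eq_mul]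

theorem randomizedTests_subset_memX : randomizedTests Ω ⊆ {X | MemX X} :=
  fun _ hX => ⟨hX.1, 1, fun ω => (abs_of_nonneg (hX.2 ω).1).trans_le (hX.2 ω).2⟩

theorem testSet_eq_sublevel (ρ : (Ω → ℝ) → ℝ) (α : ℝ) :
    testSet ρ α = {X ∈ randomizedTests Ω | ρ X ≤ α} :=
  Set.ext fun _ => ⟨fun h => ⟨⟨h.1.1, h.2.1⟩, h.2.2⟩,
    fun h => ⟨randomizedTests_subset_memX h.1, h.1.2, h.2⟩⟩

theorem testSet_subset_randomizedTests : testSet ρ α ⊆ randomizedTests Ω :=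
  fun _ hX => ⟨hX.1.1, hX.2.1⟩

theorem one_mem_randomizedTests : (1 : Ω → ℝ) ∈ randomizedTests Ω :=
  ⟨measurable_one, fun _ => ⟨zero_le_one, le_rfl⟩⟩

theorem convex_randomizedTests : Convex ℝ (randomizedTests Ω) :=
  fun _ hX _ hY a b ha hb hab => ⟨(hX.1.const_smul a).add (hY.1.const_smul b),
    fun ω => convex_Icc 0 1 (hX.2 ω) (hY.2 ω) ha hb hab⟩

section Integral

variable {ν : Measure Ω} [IsFiniteMeasure ν]

theorem MemX.integrable (hX : MemX X) : Integrable X ν := by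
  obtain ⟨hXm, M, hM⟩ := hX
  exact .of_bound hXm.aestronglyMeasurable M (ae_of_all ν hM)

theorem concaveOn_integral_memX : ConcaveOn ℝ {X | MemX X} fun X : Ω → ℝ => ∫ ω, X ω ∂ν := by
  refine ⟨convex_memX, fun X hX Y hY a b _ _ _ => Eq.le ?_⟩
  calc a • ∫ ω, X ω ∂ν + b • ∫ ω, Y ω ∂ν
      = ∫ ω, (a • X) ω ∂ν + ∫ ω, (b • Y) ω ∂ν := by
        simp only [Pi.smul_apply, integral_smul]
    _ = ∫ ω, (a • X + b • Y) ω ∂ν :=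
        (integral_add (hX.const_smul a).integrable (hY.const_smul b).integrable).symm

theorem bddAbove_integral_randomizedTests :
    BddAbove ((fun X : Ω → ℝ => ∫ ω, X ω ∂ν) '' randomizedTests Ω) := by
  refine ⟨∫ _, 1 ∂ν, ?_⟩
  rintro _ ⟨X, hX, rfl⟩
  exact integral_mono (randomizedTests_subset_memX hX).integrable (integrable_const 1)
    fun ω => (hX.2 ω).2

theorem isMaxOn_integral_ofReal_smul_of_eq_sSup {s : Set (Ω → ℝ)} {c : ℝ}
    (hs : s ⊆ randomizedTests Ω) (hc : 0 ≤ c)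
    (h : c * ∫ ω, X ω ∂ν = sSup ((fun Y : Ω → ℝ => c * ∫ ω, Y ω ∂ν) '' s)) :
    IsMaxOn (fun Y => ∫ ω, Y ω ∂(ENNReal.ofReal c • ν)) s X := by
  have hsmul (Y : Ω → ℝ) : c * ∫ ω, Y ω ∂ν = ∫ ω, Y ω ∂(ENNReal.ofReal c • ν) := by
    rw [integral_smul_measure, ENNReal.toReal_ofReal hc, smul_eq_mul]
  have := ν.smul_finite (ENNReal.ofReal_ne_top (r := c))
  simp only [hsmul] at h
  have hbdd := (bddAbove_integral_randomizedTests (ν := ENNReal.ofReal c • ν)).mono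
    (Set.image_mono hs)
  exact fun Y hY => (le_csSup hbdd ⟨Y, hY, rfl⟩).trans_eq h.symm

theorem ae_eq_one_of_isMaxOn_randomizedTests (hX : X ∈ randomizedTests Ω)
    (hmax : IsMaxOn (fun Y => ∫ ω, Y ω ∂ν) (randomizedTests Ω) X) : X =ᵐ[ν] 1 := by
  have hle : X ≤ᵐ[ν] 1 := ae_of_all ν fun ω => (hX.2 ω).2
  have hXint : Integrable X ν := (randomizedTests_subset_memX hX).integrable
  have honeint : Integrable (1 : Ω → ℝ) ν := integrable_const 1
  exact (integral_eq_iff_of_ae_le hXint honeint hle).1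
    (le_antisymm (integral_mono_ae hXint honeint hle) (hmax one_mem_randomizedTests))

theorem ae_eq_one_of_isMaxOn_testSet {X₀ : Ω → ℝ} (hρ : ConvexOn ℝ (randomizedTests Ω) ρ)
    (hX₀ : X₀ ∈ testSet ρ α) (hlt : ρ X₀ < α)
    (hX₀max : IsMaxOn (fun Y => ∫ ω, Y ω ∂ν) (testSet ρ α) X₀) (hX : X ∈ testSet ρ α)
    (hXmax : IsMaxOn (fun Y => ∫ ω, Y ω ∂ν) (testSet ρ α) X) : X =ᵐ[ν] 1 := by
  have hX₀global : IsMaxOn (fun Y => ∫ ω, Y ω ∂ν) (randomizedTests Ω) X₀ :=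
    isMaxOn_of_isMaxOn_sublevel_of_lt hρ
      (concaveOn_integral_memX.subset randomizedTests_subset_memX convex_randomizedTests)
      (testSet_subset_randomizedTests hX₀) hlt (testSet_eq_sublevel ρ α ▸ hX₀max)
  exact ae_eq_one_of_isMaxOn_randomizedTests (testSet_subset_randomizedTests hX)
    fun Y hY => le_trans (b := ∫ ω, X₀ ω ∂ν) (hX₀global hY) (hXmax hX₀)

end Integral

theorem ae_eq_indicator_add_mul_indicator_of_ae_eq_one {ν K : Measure Ω} {H : Ω → ℝ≥0∞}
    (hX : X =ᵐ[ν] 1) (hH : Measurable H) (hHν : K.withDensity H ≪ ν) :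
    ∀ᵐ ω ∂K, X ω = Set.indicator {ω' | 0 < H ω'} (fun _ => (1 : ℝ)) ω +
      X ω * Set.indicator {ω' | H ω' = 0} (fun _ => (1 : ℝ)) ω := by
  filter_upwards [(ae_withDensity_iff hH).1 (hHν.ae_le hX)] with ω hω
  rcases eq_or_ne (H ω) 0 with h0 | hne
  · simp [h0]
  · simp [hne, hω hne, pos_iff_ne_zero]

theorem neyman_pearson_form_second_case_general {Q K : Measure Ω} [IsFiniteMeasure Q] {c γ : ℝ}
    {H : Ω → ℝ≥0∞} (hρ : ConvexOn ℝ (randomizedTests Ω) ρ) (hc : 0 ≤ c)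
    (hγ : γ = sSup ((fun Y : Ω → ℝ => c * ∫ ω, Y ω ∂Q) '' testSet ρ α))
    (hex : ∃ X₀ ∈ testSet ρ α, c * ∫ ω, X₀ ω ∂Q = γ ∧ ρ X₀ < α)
    (hX : X ∈ testSet ρ α) (hXγ : c * ∫ ω, X ω ∂Q = γ)
    (hH : Measurable H) (hHQ : K.withDensity H ≪ ENNReal.ofReal c • Q) :
    ∀ᵐ ω ∂K, X ω = Set.indicator {ω' | 0 < H ω'} (fun _ => (1 : ℝ)) ω +
      X ω * Set.indicator {ω' | H ω' = 0} (fun _ => (1 : ℝ)) ω := by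
  obtain ⟨X₀, hX₀, hX₀γ, hlt⟩ := hex
  have := Q.smul_finite (ENNReal.ofReal_ne_top (r := c))
  have hmax {Y : Ω → ℝ} (hYγ : c * ∫ ω, Y ω ∂Q = γ) :
      IsMaxOn (fun Z => ∫ ω, Z ω ∂(ENNReal.ofReal c • Q)) (testSet ρ α) Y :=
    isMaxOn_integral_ofReal_smul_of_eq_sSup testSet_subset_randomizedTests hc (hYγ.trans hγ)
  have hXone : X =ᵐ[ENNReal.ofReal c • Q] 1 :=
    ae_eq_one_of_isMaxOn_testSet hρ hX₀ hlt (hmax hX₀γ) hX (hmax hXγ)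
  exact ae_eq_indicator_add_mul_indicator_of_ae_eq_one hXone hH hHQ

end

/-- Theorem (second case): if some solution of problem (4.3) has `E_μ < α`, then for
every probability measure `P` and every solution `X_α` of problem (4.3), with
`K = (P + λQ_α^c)/2` and `H = d(λQ_α^c)/dK`, one has
`X_α = 1_{{H > 0}} + B·1_{{H = 0}}`, `K`-a.s., for some `B : Ω → [0,1]`. -/
theorem neyman_pearson_form_second_case {Ω : Type*} [MeasurableSpace Ω]
    (Emu Eups : (Ω → ℝ) → ℝ)
    (hEmu : IsSublinearOp Emu) (hEups : IsSublinearOp Eups)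
    (α : ℝ) (hα0 : 0 < α) (hα1 : α < 1)
    (lam : ℝ) (hlam0 : 0 ≤ lam) (hlam1 : lam ≤ 1)
    (Qc : Measure Ω) (hQc : IsProbabilityMeasure Qc)
    (Qp : (Ω → ℝ) → ℝ) (hQplin : IsLinearOp Qp)
    (hQppos : ∀ X : Ω → ℝ, MemX X → (∀ ω, 0 ≤ X ω) → 0 ≤ Qp X)
    (hQpone : Qp (fun _ => 1) = 1) (hQppure : PureAdditive Qp)
    (Qa : (Ω → ℝ) → ℝ) (hQalin : IsLinearOp Qa) (hQadom : Dominated Qa Eups)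
    (hQasup : sSup (Qa '' testSet Emu α) = sSup (conjOp Eups '' testSet Emu α))
    (hQadec : ∀ X : Ω → ℝ, MemX X → Qa X = lam * ∫ ω, X ω ∂Qc + (1 - lam) * Qp X)
    (γ : ℝ) (hγ : γ = sSup ((fun X : Ω → ℝ => lam * ∫ ω, X ω ∂Qc) '' testSet Emu α))
    (hex : ∃ Xa0 ∈ testSet Emu α, lam * ∫ ω, Xa0 ω ∂Qc = γ ∧ Emu Xa0 < α) :
    ∀ P : Measure Ω, IsProbabilityMeasure P →
    ∀ Xa ∈ testSet Emu α, lam * ∫ ω, Xa ω ∂Qc = γ →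
    ∃ B : Ω → ℝ, Measurable B ∧ (∀ ω, 0 ≤ B ω ∧ B ω ≤ 1) ∧
    ∃ K : Measure Ω,
      K = ENNReal.ofReal (1 / 2) • P + ENNReal.ofReal (lam / 2) • Qc ∧
    ∃ H : Ω → ℝ≥0∞,
      H = (ENNReal.ofReal lam • Qc).rnDeriv K ∧
      ∀ᵐ ω ∂K, Xa ω =
        Set.indicator {ω' | 0 < H ω'} (fun _ => (1 : ℝ)) ω +
        B ω * Set.indicator {ω' | H ω' = 0} (fun _ => (1 : ℝ)) ω := by
  intro P _ Xa hXa hXaγ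
  exact ⟨Xa, hXa.1.1, hXa.2.1, _, rfl, _, rfl, neyman_pearson_form_second_case_general
    (hEmu.convexOn.subset randomizedTests_subset_memX convex_randomizedTests) hlam0 hγ hex hXa hXaγ
    (Measure.measurable_rnDeriv _ _) (Measure.withDensity_rnDeriv_le _ _).absolutelyContinuous⟩
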